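/- With Y₃' := ⁅Y₁', Y₂'⁆, Y₄' := ⁅Y₁', Y₃'⁆, Y₅' := −(1/3) • ⁅Y₁', Y₄'⁆ and Y₆' := −(1/2) • ⁅Y₁', Y₅'⁆, one has ⁅Y₁', Y₆'⁆ = 0. -/

import Mathlib

/-!
The element `Z := (ad Y₁')⁵ Y₂'` is, up to a scalar, the bracket in question, and its vanishing is
the Serre relation attached to the Cartan entry `-4` of type `A₂⁽²⁾`.

Let `X₀` be the Euler derivation `E q ↦ q • E q`, `uₙ ↦ 0`. On generators one sees
`⁅D, Y₁'⁆ = -E 1 • X₀`, `⁅D, Y₂'⁆ = -E (-2) • X₀`, `⁅X₀, Y₁'⁆ = Y₁'` and `⁅X₀, Y₂'⁆ = -2 • Y₂'`.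
Writing `Zₖ = (ad Y₁')ᵏ Y₂'`, of `X₀`-weight `k - 2`, the Jacobi identity gives
`⁅D, Zₖ₊₁⁆ = -(k - 2) • E 1 • Zₖ + ⁅Y₁', ⁅D, Zₖ⁆⁆` (`lie_D_step`). Hence
`⁅D, Z₂⁆ = 3 • E 1 • Z₁`, `⁅D, Z₃⁆ = 3 • E 1 • Z₂`, `⁅D, Z₄⁆ = 2 • E 1 • Z₃` and `⁅D, Z₅⁆ = 0`.
A derivation that commutes with `D` and kills every `E q` and `u₁` kills all `uₙ = Dⁿ⁻¹ u₁`, hence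
is zero (`eq_zero_of_lie_D`).
-/


set_option synthInstance.maxHeartbeats 1000000
set_option maxHeartbeats 1000000

noncomputable section

/-- The algebra of "quasipolynomials": the group algebra of `ℤ` (group element `q`
modelling `e^{q·u}`) with coefficients in polynomials in countably many variables
(variable of index `n-1` modelling the `n`-th `x`-derivative of `u`). -/
abbrev QP : Type := AddMonoidAlgebra (MvPolynomial ℕ ℂ) ℤ

/-- `E q` models `e^{q·u}`. -/
def E (q : ℤ) : QP := AddMonoidAlgebra.single q 1

/-- `uvar n` models the `n`-th derivative `∂ⁿu/∂xⁿ` (for `n ≥ 1`); it is the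
polynomial generator of index `n - 1`. -/
def uvar (n : ℕ) : QP := AddMonoidAlgebra.single 0 (MvPolynomial.X (n - 1))

/-- `D` is the total `x`-derivative: the unique `ℂ`-derivation of `QP` with
`D uₙ = u_{n+1}` for `n ≥ 1` and `D (E q) = q • (u₁ * E q)`. -/
def IsD (D : Derivation ℂ QP QP) : Prop :=
  (∀ n : ℕ, 1 ≤ n → D (uvar n) = uvar (n + 1)) ∧
  (∀ q : ℤ, D (E q) = q • (uvar 1 * E q))

/-- `X₀` models `∂/∂u`: the unique `ℂ`-derivation with `X₀ uₙ = 0` and `X₀ (E q) = q • E q`. -/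
def IsX0 (X : Derivation ℂ QP QP) : Prop :=
  (∀ n : ℕ, 1 ≤ n → X (uvar n) = 0) ∧ (∀ q : ℤ, X (E q) = q • E q)

/-- `X_f` is the unique `ℂ`-derivation with `X_f (E q) = 0` for all `q` and
`X_f uₙ = D^[n-1] f` for all `n ≥ 1`. -/
def IsXf (D : Derivation ℂ QP QP) (f : QP) (Xf : Derivation ℂ QP QP) : Prop :=
  (∀ q : ℤ, Xf (E q) = 0) ∧ (∀ n : ℕ, 1 ≤ n → Xf (uvar n) = (⇑D)^[n - 1] f)

/-- A derivation of `QP` is determined by its values on the `E q` and the `uₙ`. -/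
lemma derivation_ext {d₁ d₂ : Derivation ℂ QP QP} (hE : ∀ q, d₁ (E q) = d₂ (E q))
    (hu : ∀ n, 1 ≤ n → d₁ (uvar n) = d₂ (uvar n)) : d₁ = d₂ := by
  have h0 : ∀ p : MvPolynomial ℕ ℂ,
      d₁ (AddMonoidAlgebra.single 0 p) = d₂ (AddMonoidAlgebra.single 0 p) := by
    intro p
    induction p using MvPolynomial.induction_on with
    | C a =>
      have : (AddMonoidAlgebra.single 0 (MvPolynomial.C a) : QP) = algebraMap ℂ QP a := rfl
      rw [this, d₁.map_algebraMap, d₂.map_algebraMap]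
    | add p q hp hq => rw [AddMonoidAlgebra.single_add, map_add, map_add, hp, hq]
    | mul_X p n hp =>
      have : (AddMonoidAlgebra.single 0 (p * MvPolynomial.X n) : QP)
          = AddMonoidAlgebra.single 0 p * uvar (n + 1) := by
        simp [uvar]
      rw [this, d₁.leibniz, d₂.leibniz, hp, hu _ (by omega)]
  ext1 x
  induction x using AddMonoidAlgebra.induction_linear with
  | zero => rw [map_zero, map_zero]
  | add f g hf hg => rw [map_add, map_add, hf, hg]
  | single q p =>
    have : (AddMonoidAlgebra.single q p : QP) = E q * AddMonoidAlgebra.single 0 p := by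
      simp [E]
    rw [this, d₁.leibniz, d₂.leibniz, h0, hE]

lemma E_mul (p q : ℤ) : E p * E q = E (p + q) := by
  rw [E, E, AddMonoidAlgebra.single_mul_single, mul_one, E]

lemma E_zero : E 0 = 1 := rfl

/-! The next identities are instances of general Lie ring facts. Rewriting with the general lemmas
fails to unify the algebraic instances on `Derivation ℂ QP QP`, so they are proved pointwise. -/

lemma der_jacobi (X Y Z : Derivation ℂ QP QP) : ⁅X, ⁅Y, Z⁆⁆ = ⁅⁅X, Y⁆, Z⁆ + ⁅Y, ⁅X, Z⁆⁆ := by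
  ext1 x
  simp only [Derivation.commutator_apply, Derivation.add_apply, map_sub]
  abel

lemma der_lie_self (Y : Derivation ℂ QP QP) : ⁅Y, Y⁆ = 0 := by
  ext1 x
  simp only [Derivation.commutator_apply, Derivation.zero_apply, sub_self]

lemma der_neg_lie_swap (Y Z : Derivation ℂ QP QP) : -⁅Z, Y⁆ = ⁅Y, Z⁆ := by
  ext1 x
  simp only [Derivation.commutator_apply, Derivation.neg_apply, neg_sub]

lemma der_lie_add (Y Z W : Derivation ℂ QP QP) : ⁅Y, Z + W⁆ = ⁅Y, Z⁆ + ⁅Y, W⁆ := by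
  ext1 x
  simp only [Derivation.commutator_apply, Derivation.add_apply, map_add]
  abel

lemma der_lie_neg (Y Z : Derivation ℂ QP QP) : ⁅Y, -Z⁆ = -⁅Y, Z⁆ := by
  ext1 x
  simp only [Derivation.commutator_apply, Derivation.neg_apply, map_neg]
  abel

lemma der_neg_lie (Y Z : Derivation ℂ QP QP) : ⁅-Y, Z⁆ = -⁅Y, Z⁆ := by
  rw [← der_neg_lie_swap, der_lie_neg, der_neg_lie_swap]

lemma der_lie_zsmul (Y Z : Derivation ℂ QP QP) (c : ℤ) : ⁅Y, c • Z⁆ = c • ⁅Y, Z⁆ := by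
  ext1 x
  simp only [Derivation.commutator_apply, Derivation.smul_apply, map_zsmul, smul_sub]

lemma der_lie_smul (Y Z : Derivation ℂ QP QP) (c : ℂ) : ⁅Y, c • Z⁆ = c • ⁅Y, Z⁆ := by
  ext1 x
  simp only [Derivation.commutator_apply, Derivation.smul_apply, Derivation.map_smul, smul_sub]

lemma lie_smul_right (Y Z : Derivation ℂ QP QP) (a : QP) :
    ⁅Y, a • Z⁆ = Y a • Z + a • ⁅Y, Z⁆ := by
  ext1 x
  simp only [Derivation.commutator_apply, Derivation.add_apply, Derivation.smul_apply,
    Derivation.leibniz, smul_eq_mul]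
  ring

lemma lie_smul_left (Y Z : Derivation ℂ QP QP) (a : QP) :
    ⁅a • Y, Z⁆ = a • ⁅Y, Z⁆ - Z a • Y := by
  ext1 x
  simp only [Derivation.commutator_apply, Derivation.sub_apply, Derivation.smul_apply,
    Derivation.leibniz, smul_eq_mul]
  ring

lemma lie_D_Xf {D X Y : Derivation ℂ QP QP} (hD : IsD D) (hX : IsX0 X) {p : ℤ}
    (hY : IsXf D (E p) Y) : ⁅D, Y⁆ = -(E p • X) := by
  refine derivation_ext (fun q => ?_) fun n hn => ?_
  · have h1 : Y (uvar 1) = E p := hY.2 1 le_rfl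
    simp only [Derivation.commutator_apply, Derivation.neg_apply, Derivation.smul_apply, hY.1,
      hX.2, hD.2, map_zero, map_zsmul, Derivation.leibniz, smul_eq_mul, h1]
    simp only [zsmul_eq_mul]
    ring
  · simp only [Derivation.commutator_apply, Derivation.neg_apply, Derivation.smul_apply,
      hX.1 n hn, hD.1 n hn, hY.2 n hn, hY.2 (n + 1) (by omega)]
    obtain ⟨m, rfl⟩ : ∃ m, n = m + 1 := ⟨n - 1, by omega⟩
    simp [Function.iterate_succ_apply']

lemma lie_X0_D {D X : Derivation ℂ QP QP} (hD : IsD D) (hX : IsX0 X) : ⁅X, D⁆ = 0 := by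
  refine derivation_ext (fun q => ?_) fun n hn => ?_
  · simp only [Derivation.commutator_apply, hX.2, hD.2, map_zsmul, Derivation.leibniz,
      hX.1 1 le_rfl, smul_eq_mul, Derivation.zero_apply]
    simp only [zsmul_eq_mul]
    ring
  · simp [Derivation.commutator_apply, hX.1 n hn, hD.1 n hn, hX.1 (n + 1) (by omega)]

lemma lie_X0_Xf {D X Y : Derivation ℂ QP QP} (hD : IsD D) (hX : IsX0 X) {p : ℤ}
    (hY : IsXf D (E p) Y) : ⁅X, Y⁆ = p • Y := by
  have hc : ∀ x, X (D x) = D (X x) := fun x => by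
    have := congrArg (fun d : Derivation ℂ QP QP => d x) (lie_X0_D hD hX)
    simpa [Derivation.commutator_apply, sub_eq_zero] using this
  have hit : ∀ k : ℕ, X ((⇑D)^[k] (E p)) = p • (⇑D)^[k] (E p) := by
    intro k
    induction k with
    | zero => exact hX.2 p
    | succ k ih => rw [Function.iterate_succ_apply', hc, ih, map_zsmul]
  refine derivation_ext (fun q => ?_) fun n hn => ?_
  · simp [Derivation.commutator_apply, hY.1, hX.2]
  · simp [Derivation.commutator_apply, hY.2 n hn, hX.1 n hn, hit]

/-- The Euler derivation exists: it is recovered from `⁅D, Y₁'⁆ = -E 1 • X₀` by dividing by the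
unit `-E 1`. -/
lemma exists_X0 {D Y : Derivation ℂ QP QP} (hD : IsD D) (hY : IsXf D (E 1) Y) :
    ∃ X, IsX0 X := by
  refine ⟨-(E (-1) • ⁅D, Y⁆), fun n hn => ?_, fun q => ?_⟩
  · simp only [Derivation.commutator_apply, Derivation.neg_apply, Derivation.smul_apply,
      hD.1 n hn, hY.2 n hn, hY.2 (n + 1) (by omega)]
    obtain ⟨m, rfl⟩ : ∃ m, n = m + 1 := ⟨n - 1, by omega⟩
    simp [Function.iterate_succ_apply']
  · have h1 : Y (uvar 1) = E 1 := hY.2 1 le_rfl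
    have h2 : E (-1) * E 1 = 1 := by rw [E_mul]; exact E_zero
    simp only [Derivation.commutator_apply, Derivation.neg_apply, Derivation.smul_apply, hY.1,
      hD.2, map_zero, map_zsmul, Derivation.leibniz, smul_eq_mul, h1]
    simp only [zsmul_eq_mul]
    linear_combination (q : QP) * E q * h2

/-- Brackets with `Y₁'` raise the `X₀`-weight by one. -/
lemma weight_step {X Y Z : Derivation ℂ QP QP} {c : ℤ} (hXY : ⁅X, Y⁆ = (1 : ℤ) • Y)
    (hXZ : ⁅X, Z⁆ = c • Z) : ⁅X, ⁅Y, Z⁆⁆ = (c + 1) • ⁅Y, Z⁆ := by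
  rw [der_jacobi, hXY, hXZ, one_smul, der_lie_zsmul, add_smul, one_smul, add_comm]

lemma lie_apply_E {Y Z : Derivation ℂ QP QP} (hY : ∀ q, Y (E q) = 0) (hZ : ∀ q, Z (E q) = 0)
    (q : ℤ) : ⁅Y, Z⁆ (E q) = 0 := by
  simp [Derivation.commutator_apply, hY, hZ]

/-- The recursion for `⁅D, Zₖ⁆` along the `Y₁'`-string. -/
lemma lie_D_step {D X Y Z : Derivation ℂ QP QP} {c : ℤ} (hDY : ⁅D, Y⁆ = -(E 1 • X))
    (hXZ : ⁅X, Z⁆ = c • Z) (hZ : ∀ q, Z (E q) = 0) :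
    ⁅D, ⁅Y, Z⁆⁆ = -(c • E 1 • Z) + ⁅Y, ⁅D, Z⁆⁆ := by
  rw [der_jacobi, hDY, der_neg_lie, lie_smul_left, hXZ, hZ]
  ext1 x
  simp only [Derivation.add_apply, Derivation.neg_apply, Derivation.sub_apply,
    Derivation.smul_apply, smul_eq_mul, zsmul_eq_mul]
  ring

/-- Iterated step: `⁅D, Z⁆ = a • E 1 • W` propagates to `⁅Y, Z⁆` when `Z = ⁅Y, W⁆`. -/
lemma lie_D_string {D X Y W : Derivation ℂ QP QP} {a c : ℤ} (hDY : ⁅D, Y⁆ = -(E 1 • X))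
    (hXZ : ⁅X, ⁅Y, W⁆⁆ = c • ⁅Y, W⁆) (hY : ∀ q, Y (E q) = 0) (hW : ∀ q, W (E q) = 0)
    (hDZ : ⁅D, ⁅Y, W⁆⁆ = a • E 1 • W) :
    ⁅D, ⁅Y, ⁅Y, W⁆⁆⁆ = (a - c) • E 1 • ⁅Y, W⁆ := by
  rw [lie_D_step hDY hXZ (lie_apply_E hY hW), hDZ, der_lie_zsmul, lie_smul_right, hY, zero_smul,
    zero_add, sub_smul]
  abel

lemma eq_zero_of_lie_D {D Z : Derivation ℂ QP QP} (hD : IsD D) (hDZ : ⁅D, Z⁆ = 0)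
    (hE : ∀ q, Z (E q) = 0) (hu : Z (uvar 1) = 0) : Z = 0 := by
  have hc : ∀ x, D (Z x) = Z (D x) := fun x => by
    have := congrArg (fun d : Derivation ℂ QP QP => d x) hDZ
    simpa [Derivation.commutator_apply, sub_eq_zero] using this
  refine derivation_ext (fun q => hE q) fun n hn => ?_
  induction n, hn using Nat.le_induction with
  | base => exact hu
  | succ n hn ih => rw [← hD.1 n hn, ← hc, ih]; simp

/-- With `Y₃' := ⁅Y₁', Y₂'⁆`, `Y₄' := ⁅Y₁', Y₃'⁆`, `Y₅' := -(1/3) • ⁅Y₁', Y₄'⁆`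
and `Y₆' := -(1/2) • ⁅Y₁', Y₅'⁆`, one has `⁅Y₁', Y₆'⁆ = 0`. -/
theorem stmt_13 (D Y1 Y2 Y3 Y4 Y5 Y6 : Derivation ℂ QP QP) (hD : IsD D)
    (hY1 : IsXf D (E 1) Y1) (hY2 : IsXf D (E (-2)) Y2)
    (hY3 : Y3 = ⁅Y1, Y2⁆) (hY4 : Y4 = ⁅Y1, Y3⁆)
    (hY5 : Y5 = -(1 / 3 : ℂ) • ⁅Y1, Y4⁆) (hY6 : Y6 = -(1 / 2 : ℂ) • ⁅Y1, Y5⁆) :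
    ⁅Y1, Y6⁆ = 0 := by
  obtain ⟨X, hX⟩ := exists_X0 hD hY1
  have hDY := lie_D_Xf hD hX hY1
  have hDY2 := lie_D_Xf hD hX hY2
  have hXY := lie_X0_Xf hD hX hY1
  have w0 := lie_X0_Xf hD hX hY2
  have w1 := weight_step hXY w0
  have w2 := weight_step hXY w1
  have w3 := weight_step hXY w2
  have w4 := weight_step hXY w3
  have e1 := lie_apply_E hY1.1 hY2.1
  have e2 := lie_apply_E hY1.1 e1
  have e3 := lie_apply_E hY1.1 e2
  have e4 := lie_apply_E hY1.1 e3
  have d1 : ⁅D, ⁅Y1, Y2⁆⁆ = (2 : ℤ) • E 1 • Y2 + E (-2) • Y1 := by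
    rw [lie_D_step hDY w0 hY2.1, hDY2, der_lie_neg, lie_smul_right, hY1.1, zero_smul, zero_add,
      ← der_neg_lie_swap Y1 X, hXY, one_smul]
    ext1 x
    simp only [Derivation.add_apply, Derivation.neg_apply, Derivation.smul_apply, smul_eq_mul,
      zsmul_eq_mul]
    push_cast
    ring
  -- The term `E (-2) • Y₁'` commutes with `Y₁'`, so only the string term survives.
  have d2 : ⁅D, ⁅Y1, ⁅Y1, Y2⁆⁆⁆ = (3 : ℤ) • E 1 • ⁅Y1, Y2⁆ := by
    rw [lie_D_step hDY w1 e1, d1, der_lie_add, der_lie_zsmul, lie_smul_right, lie_smul_right, hY1.1,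
      hY1.1, der_lie_self, zero_smul, zero_smul, smul_zero, zero_add, add_zero, add_zero, ← neg_smul,
      ← add_smul]
    norm_num
  have d3 := lie_D_string hDY w2 hY1.1 e1 d2
  have d4 := lie_D_string hDY w3 hY1.1 e2 d3
  have d5 := lie_D_string hDY w4 hY1.1 e3 d4
  have u1 : Y1 (uvar 1) = E 1 := hY1.2 1 le_rfl
  have u2 : Y2 (uvar 1) = E (-2) := hY2.2 1 le_rfl
  have key : ⁅Y1, ⁅Y1, ⁅Y1, ⁅Y1, ⁅Y1, Y2⁆⁆⁆⁆⁆ = 0 := by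
    refine eq_zero_of_lie_D hD ?_ (lie_apply_E hY1.1 e4) ?_
    · rw [d5]; norm_num
    · have v1 : ⁅Y1, Y2⁆ (uvar 1) = 0 := by
        rw [Derivation.commutator_apply, u1, u2, hY1.1, hY2.1, sub_zero]
      have step : ∀ Z : Derivation ℂ QP QP, (∀ q, Z (E q) = 0) → Z (uvar 1) = 0 →
          ⁅Y1, Z⁆ (uvar 1) = 0 := fun Z hZ h => by
        rw [Derivation.commutator_apply, u1, h, hZ, map_zero, sub_zero]
      exact step _ e4 (step _ e3 (step _ e2 (step _ e1 v1)))
  rw [hY6, hY5, hY4, hY3]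
  simp only [der_lie_smul, key, smul_zero]
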